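/- Let V ∈ L^p(Ω) with 1 < p < ∞ and V ≥ 0 a.e. For every f ∈ L²(Ω) there exists a unique u ∈ H₀(Ω) such that a(u,v) = ∫_Ω f v dxdy for all v ∈ H₀(Ω); that is, the Dirichlet boundary value problem −(y^{2α₁}∂ₓ²u + x^{2α₂}∂_y²u) + V u = f, u = 0 on ∂Ω, has a unique weak solution. -/

import Mathlib

open MeasureTheory Set Filter

noncomputable section

/-- The open unit square `Ω = (0,1) × (0,1)` in `ℝ²`. -/
def Omega : Set (ℝ × ℝ) := Ioo (0:ℝ) 1 ×ˢ Ioo (0:ℝ) 1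

/-- Test functions on a set `s`: smooth with compact support contained in `s`. -/
def IsTestOn (s : Set (ℝ × ℝ)) (φ : ℝ × ℝ → ℝ) : Prop :=
  ContDiff ℝ (⊤ : ℕ∞) φ ∧ HasCompactSupport φ ∧ tsupport φ ⊆ s

/-- Classical partial derivative in the `x`-direction. -/
def pdx (φ : ℝ × ℝ → ℝ) (p : ℝ × ℝ) : ℝ := fderiv ℝ φ p (1, 0)

/-- Classical partial derivative in the `y`-direction. -/
def pdy (φ : ℝ × ℝ → ℝ) (p : ℝ × ℝ) : ℝ := fderiv ℝ φ p (0, 1)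

/-- `g` is a weak `x`-partial derivative of `u` on `s`. -/
def HasWeakDerivXOn (s : Set (ℝ × ℝ)) (u g : ℝ × ℝ → ℝ) : Prop :=
  LocallyIntegrableOn u s volume ∧ LocallyIntegrableOn g s volume ∧
  ∀ φ : ℝ × ℝ → ℝ, IsTestOn s φ →
    ∫ p in s, u p * pdx φ p = - ∫ p in s, g p * φ p

/-- `g` is a weak `y`-partial derivative of `u` on `s`. -/
def HasWeakDerivYOn (s : Set (ℝ × ℝ)) (u g : ℝ × ℝ → ℝ) : Prop :=
  LocallyIntegrableOn u s volume ∧ LocallyIntegrableOn g s volume ∧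
  ∀ φ : ℝ × ℝ → ℝ, IsTestOn s φ →
    ∫ p in s, u p * pdy φ p = - ∫ p in s, g p * φ p

/-- Test functions on `Ω`. -/
def IsTest (φ : ℝ × ℝ → ℝ) : Prop := IsTestOn Omega φ

/-- Membership in the weighted Sobolev space `𝓗¹(Ω)`, with weak derivatives `gx, gy`:
`u ∈ L²(Ω)`, `gx = ∂ₓu`, `gy = ∂_y u` weakly, and `y^α₁ gx, x^α₂ gy ∈ L²(Ω)`. -/
structure MemH1 (α₁ α₂ : ℝ) (u gx gy : ℝ × ℝ → ℝ) : Prop where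
  memL2 : MemLp u 2 (volume.restrict Omega)
  weakX : HasWeakDerivXOn Omega u gx
  weakY : HasWeakDerivYOn Omega u gy
  wgx : MemLp (fun p => p.2 ^ α₁ * gx p) 2 (volume.restrict Omega)
  wgy : MemLp (fun p => p.1 ^ α₂ * gy p) 2 (volume.restrict Omega)

/-- The `𝓗¹(Ω)` norm of `u` (with weak derivatives `gx, gy`). -/
def H1Norm (α₁ α₂ : ℝ) (u gx gy : ℝ × ℝ → ℝ) : ℝ :=
  Real.sqrt ((∫ p in Omega, (u p) ^ 2) +
    (∫ p in Omega, (p.2 ^ α₁ * gx p) ^ 2) +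
    (∫ p in Omega, (p.1 ^ α₂ * gy p) ^ 2))

/-- Membership in `𝓗₀¹(Ω)`: member of `𝓗¹(Ω)` approximable in the `𝓗¹` norm by
test functions. -/
def MemH10 (α₁ α₂ : ℝ) (u gx gy : ℝ × ℝ → ℝ) : Prop :=
  MemH1 α₁ α₂ u gx gy ∧
  ∀ ε : ℝ, 0 < ε → ∃ φ : ℝ × ℝ → ℝ, IsTest φ ∧
    H1Norm α₁ α₂ (fun p => u p - φ p) (fun p => gx p - pdx φ p)
      (fun p => gy p - pdy φ p) < ε

/-- Membership in `H₀(Ω) = {u ∈ 𝓗₀¹(Ω) : ∫_Ω V u² < ∞}`. -/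
def MemH0 (α₁ α₂ : ℝ) (V u gx gy : ℝ × ℝ → ℝ) : Prop :=
  MemH10 α₁ α₂ u gx gy ∧
  IntegrableOn (fun p => V p * (u p) ^ 2) Omega volume

/-- The bilinear form `a(u,v)` associated with the sub-elliptic operator with potential `V`. -/
def aForm (α₁ α₂ : ℝ) (V u gx gy v hx hy : ℝ × ℝ → ℝ) : ℝ :=
  ∫ p in Omega, ((p.2 ^ α₁ * gx p) * (p.2 ^ α₁ * hx p) +
    (p.1 ^ α₂ * gy p) * (p.1 ^ α₂ * hy p) + V p * u p * v p)

/-- The bilinear form `a₁(u,v)` (no potential). -/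
def a1Form (α₁ α₂ : ℝ) (u gx gy v hx hy : ℝ × ℝ → ℝ) : ℝ :=
  ∫ p in Omega, ((p.2 ^ α₁ * gx p) * (p.2 ^ α₁ * hx p) +
    (p.1 ^ α₂ * gy p) * (p.1 ^ α₂ * hy p))

/-- Membership in `S_p = {V ∈ L^p(Ω) : V ≥ 0 a.e., ‖V‖_{L^p(Ω)} ≤ M}`. -/
def MemSp (ppow M : ℝ) (V : ℝ × ℝ → ℝ) : Prop :=
  MemLp V (ENNReal.ofReal ppow) (volume.restrict Omega) ∧
  (∀ᵐ p ∂(volume.restrict Omega), 0 ≤ V p) ∧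
  eLpNorm V (ENNReal.ofReal ppow) (volume.restrict Omega) ≤ ENNReal.ofReal M

/-- `u` (with weak derivatives `gx, gy`) is an eigenfunction of the sub-elliptic operator
with potential `V` for the eigenvalue `lam`. -/
def IsEigenfun (α₁ α₂ : ℝ) (V : ℝ × ℝ → ℝ) (lam : ℝ) (u gx gy : ℝ × ℝ → ℝ) : Prop :=
  MemH0 α₁ α₂ V u gx gy ∧
  ∀ v hx hy : ℝ × ℝ → ℝ, MemH0 α₁ α₂ V v hx hy →
    aForm α₁ α₂ V u gx gy v hx hy = lam * ∫ p in Omega, u p * v p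

/-- The first eigenvalue `λ₁(V) = inf { a(u,u) : u ∈ H₀(Ω), ‖u‖_{L²} = 1 }`. -/
def lam1 (α₁ α₂ : ℝ) (V : ℝ × ℝ → ℝ) : ℝ :=
  sInf { r | ∃ u gx gy : ℝ × ℝ → ℝ, MemH0 α₁ α₂ V u gx gy ∧
    (∫ p in Omega, (u p) ^ 2) = 1 ∧ r = aForm α₁ α₂ V u gx gy u gx gy }

/-- `sup { a(u,u) : u ∈ span(φ), ‖u‖_{L²(Ω)} = 1 }` for a finite family `φ` with
weak derivatives `φx, φy`. -/
def rayleighSup (α₁ α₂ : ℝ) (V : ℝ × ℝ → ℝ) {k : ℕ} (φ φx φy : Fin k → ℝ × ℝ → ℝ) : ℝ :=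
  sSup { s | ∃ c : Fin k → ℝ,
    (∫ p in Omega, (∑ i, c i * φ i p) ^ 2) = 1 ∧
    s = aForm α₁ α₂ V (fun p => ∑ i, c i * φ i p) (fun p => ∑ i, c i * φx i p)
      (fun p => ∑ i, c i * φy i p) (fun p => ∑ i, c i * φ i p)
      (fun p => ∑ i, c i * φx i p) (fun p => ∑ i, c i * φy i p) }

/-- The set of values `sup { a(u,u) : u ∈ E, ‖u‖ = 1 }` over `k`-dimensional
subspaces `E` of `H₀(Ω)` (represented by `L²(Ω)`-linearly independent families of
`k` elements of `H₀(Ω)`). -/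
def minmaxSet (α₁ α₂ : ℝ) (V : ℝ × ℝ → ℝ) (k : ℕ) : Set ℝ :=
  { r | ∃ φ φx φy : Fin k → ℝ × ℝ → ℝ,
      (∀ i, MemH0 α₁ α₂ V (φ i) (φx i) (φy i)) ∧
      (∀ c : Fin k → ℝ, (∀ᵐ p ∂(volume.restrict Omega), ∑ i, c i * φ i p = 0) → c = 0) ∧
      r = rayleighSup α₁ α₂ V φ φx φy }

/-- The `k`-th eigenvalue via the min-max principle. -/
def lamk (α₁ α₂ : ℝ) (V : ℝ × ℝ → ℝ) (k : ℕ) : ℝ := sInf (minmaxSet α₁ α₂ V k)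

/-- Membership in `U = (𝓗₀¹(Ω) ∩ L^{2q}(Ω)) \ {0}`. -/
def MemU (α₁ α₂ qe : ℝ) (u gx gy : ℝ × ℝ → ℝ) : Prop :=
  MemH10 α₁ α₂ u gx gy ∧
  MemLp u (ENNReal.ofReal (2 * qe)) (volume.restrict Omega) ∧
  ¬ (∀ᵐ p ∂(volume.restrict Omega), u p = 0)

/-- The functional `J(u) = (a₁(u,u) + M ‖u‖_{L^{2q}(Ω)}²) / ‖u‖_{L²(Ω)}²`. -/
def Jfun (α₁ α₂ M qe : ℝ) (u gx gy : ℝ × ℝ → ℝ) : ℝ :=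
  (a1Form α₁ α₂ u gx gy u gx gy +
    M * (∫ p in Omega, |u p| ^ (2 * qe)) ^ (1 / qe)) / (∫ p in Omega, (u p) ^ 2)

/-!
Split the square along the curve `y = x ^ α₂`. Below it the vertical fibres have height at most
`x ^ α₂`, so the one-dimensional Poincaré inequality on them costs exactly the weight `x ^ (2 α₂)`.
Above it `α₁ α₂ ≤ 1` gives `x ≤ y ^ α₁`, and the horizontal fibres cost `y ^ (2 α₁)`. Hence
`‖φ‖² ≤ ‖y ^ α₁ ∂ₓφ‖² + ‖x ^ α₂ ∂_yφ‖²` for test functions and, by density, on `𝓗₀¹(Ω)`: the form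
`a` is coercive. The map `u ↦ (u, y ^ α₁ ∂ₓu, x ^ α₂ ∂_yu, √V u)` identifies `H₀(Ω)` with a closed
subspace of `L²(Ω)⁴` on which `a` is the inner product of the last three entries, and the
Lax–Milgram theorem applies there.
-/

section Interval

theorem sq_integral_le_measureReal_mul_integral_sq {X : Type*} [MeasurableSpace X] {μ : Measure X}
    [IsFiniteMeasure μ] {f : X → ℝ} (hf : MemLp f 2 μ) :
    (∫ x, f x ∂μ) ^ 2 ≤ μ.real univ * ∫ x, f x ^ 2 ∂μ := by
  rcases eq_or_ne μ 0 with rfl | hμ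
  · simp
  have : NeZero μ := ⟨hμ⟩
  have jensen : (⨍ x, f x ∂μ) ^ 2 ≤ ⨍ x, f x ^ 2 ∂μ :=
    even_two.convexOn_pow.map_average_le (continuous_pow 2).continuousOn isClosed_univ
      (ae_of_all _ fun _ => mem_univ _) (hf.integrable one_le_two) hf.integrable_sq
  have hpos : 0 < μ.real univ := measureReal_univ_pos
  simp only [average_eq, smul_eq_mul, mul_pow] at jensen
  field_simp at jensen
  linarith

variable {g : ℝ → ℝ} {a b : ℝ}

theorem sq_le_mul_setIntegral_deriv_sq (hg : ContDiff ℝ 1 g) (ha : g a = 0) {y : ℝ}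
    (hy : y ∈ Ioo a b) : g y ^ 2 ≤ (y - a) * ∫ t in Ioo a b, deriv g t ^ 2 := by
  have hg' : Continuous (deriv g) := hg.continuous_deriv le_rfl
  have ftc : ∫ t in Ioc a y, deriv g t = g y := by
    rw [← intervalIntegral.integral_of_le hy.1.le, intervalIntegral.integral_deriv_eq_sub
      (fun t _ => hg.differentiable one_ne_zero t) (hg'.intervalIntegrable _ _), ha, sub_zero]
  have memLp : MemLp (deriv g) 2 (volume.restrict (Ioc a y)) :=
    (memLp_two_iff_integrable_sq hg'.aestronglyMeasurable).2 (hg'.pow 2).integrableOn_Ioc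
  calc g y ^ 2 ≤ (y - a) * ∫ t in Ioc a y, deriv g t ^ 2 := by
        simpa [ftc, hy.1.le] using sq_integral_le_measureReal_mul_integral_sq memLp
    _ ≤ (y - a) * ∫ t in Ioo a b, deriv g t ^ 2 := by
        gcongr ?_ * ?_
        · exact sub_nonneg.2 hy.1.le
        · exact setIntegral_mono_set
            ((hg'.pow 2).integrableOn_Icc.mono_set Ioo_subset_Icc_self)
            (ae_of_all _ fun t => sq_nonneg _) (Ioc_subset_Ioo_right hy.2).eventuallyLE

theorem setIntegral_sq_le_sq_mul_setIntegral_deriv_sq (hg : ContDiff ℝ 1 g) (ha : g a = 0)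
    {S : Set ℝ} {L : ℝ} (hL : 0 ≤ L) (hS : ∀ t ∈ Ioo a b ∩ S, t ≤ a + L) :
    ∫ t in Ioo a b ∩ S, g t ^ 2 ≤ L ^ 2 * ∫ t in Ioo a b, deriv g t ^ 2 := by
  set D := ∫ t in Ioo a b, deriv g t ^ 2
  have hD0 : 0 ≤ D := integral_nonneg fun t => sq_nonneg _
  have hsub : Ioo a b ∩ S ⊆ Ioc a (a + L) := fun t ht => ⟨ht.1.1, hS t ht⟩
  have hvol : volume.real (Ioo a b ∩ S) ≤ L := by
    simpa [hL] using measureReal_mono hsub (μ := volume) measure_Ioc_lt_top.ne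
  have hbound : ∀ t ∈ Ioo a b ∩ S, ‖g t ^ 2‖ ≤ L * D := by
    intro t ht
    rw [Real.norm_of_nonneg (sq_nonneg _)]
    exact (sq_le_mul_setIntegral_deriv_sq hg ha ht.1).trans
      (mul_le_mul_of_nonneg_right (sub_le_iff_le_add'.2 (hS t ht)) hD0)
  calc ∫ t in Ioo a b ∩ S, g t ^ 2 ≤ L * D * volume.real (Ioo a b ∩ S) :=
        (le_abs_self _).trans (norm_setIntegral_le_of_norm_le_const
          ((measure_mono hsub).trans_lt measure_Ioc_lt_top) hbound)
    _ ≤ L * D * L := by gcongr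
    _ = L ^ 2 * D := by ring

end Interval

section TestFunctions

namespace IsTestOn

variable {s : Set (ℝ × ℝ)} {φ ψ : ℝ × ℝ → ℝ}

theorem zero : IsTestOn s 0 :=
  ⟨contDiff_const, HasCompactSupport.zero, by simp [tsupport]⟩

theorem add (hφ : IsTestOn s φ) (hψ : IsTestOn s ψ) : IsTestOn s (φ + ψ) :=
  ⟨hφ.1.add hψ.1, hφ.2.1.add hψ.2.1, (tsupport_add φ ψ).trans (union_subset hφ.2.2 hψ.2.2)⟩

theorem const_smul (hφ : IsTestOn s φ) (c : ℝ) : IsTestOn s (c • φ) :=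
  ⟨hφ.1.const_smul c, hφ.2.1.smul_left (f := fun _ => c),
    (tsupport_smul_subset_right (fun _ => c) φ).trans hφ.2.2⟩

theorem comp_swap (hφ : IsTestOn s φ) : IsTestOn (Prod.swap ⁻¹' s) (φ ∘ Prod.swap) :=
  ⟨hφ.1.comp (contDiff_snd.prodMk contDiff_fst),
    hφ.2.1.comp_homeomorph (Homeomorph.prodComm ℝ ℝ),
    (tsupport_comp_subset_preimage φ continuous_swap).trans (preimage_mono hφ.2.2)⟩

theorem differentiable (hφ : IsTestOn s φ) : Differentiable ℝ φ :=
  hφ.1.differentiable (by simp)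

theorem fderiv_apply (hφ : IsTestOn s φ) (d : ℝ × ℝ) : IsTestOn s fun p => fderiv ℝ φ p d :=
  ⟨(hφ.1.fderiv_right (by simp)).clm_apply contDiff_const, hφ.2.1.fderiv_apply (𝕜 := ℝ) d,
    (tsupport_fderiv_apply_subset ℝ d).trans hφ.2.2⟩

theorem eq_zero_of_notMem (hφ : IsTestOn s φ) {p : ℝ × ℝ} (hp : p ∉ s) : φ p = 0 :=
  image_eq_zero_of_notMem_tsupport fun h => hp (hφ.2.2 h)

theorem memLp_continuousOn_mul (hφ : IsTestOn s φ) (hs : IsOpen s) {w : ℝ × ℝ → ℝ}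
    (hw : ContinuousOn w s) {q : ENNReal} {μ : Measure (ℝ × ℝ)} [IsFiniteMeasureOnCompacts μ] :
    MemLp (fun p => w p * φ p) q μ :=
  have hsupp : tsupport (fun p => w p * φ p) ⊆ s := tsupport_mul_subset_right.trans hφ.2.2
  ((hw.mul hφ.1.continuous.continuousOn).continuous_of_tsupport_subset hs
    hsupp).memLp_of_hasCompactSupport hφ.2.1.mul_left

theorem memLp (hφ : IsTestOn s φ) {q : ENNReal} {μ : Measure (ℝ × ℝ)}
    [IsFiniteMeasureOnCompacts μ] : MemLp φ q μ :=
  hφ.1.continuous.memLp_of_hasCompactSupport hφ.2.1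

theorem integrable_mul (hφ : IsTestOn s φ) (hψ : IsTestOn s ψ) :
    Integrable fun p => φ p * ψ p :=
  (hφ.memLp (q := 2)).integrable_mul (hψ.memLp (q := 2))

theorem setIntegral_mul_fderiv (hφ : IsTestOn s φ) (hψ : IsTestOn s ψ) (d : ℝ × ℝ) :
    ∫ p in s, φ p * fderiv ℝ ψ p d = -∫ p in s, fderiv ℝ φ p d * ψ p := by
  rw [setIntegral_eq_integral_of_forall_compl_eq_zero fun p hp => by
      simp [hφ.eq_zero_of_notMem hp],
    setIntegral_eq_integral_of_forall_compl_eq_zero fun p hp => by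
      simp [hψ.eq_zero_of_notMem hp]]
  exact integral_mul_fderiv_eq_neg_fderiv_mul_of_integrable
    ((hφ.fderiv_apply d).integrable_mul hψ) (hφ.integrable_mul (hψ.fderiv_apply d))
    (hφ.integrable_mul hψ) (fun p _ => hφ.differentiable p) fun p _ => hψ.differentiable p

theorem pdx_add (hφ : IsTestOn s φ) (hψ : IsTestOn s ψ) : pdx (φ + ψ) = pdx φ + pdx ψ := by
  ext p
  simp [pdx, fderiv_add (hφ.differentiable p) (hψ.differentiable p)]

theorem pdy_add (hφ : IsTestOn s φ) (hψ : IsTestOn s ψ) : pdy (φ + ψ) = pdy φ + pdy ψ := by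
  ext p
  simp [pdy, fderiv_add (hφ.differentiable p) (hψ.differentiable p)]

end IsTestOn

theorem pdx_const_smul (φ : ℝ × ℝ → ℝ) (c : ℝ) : pdx (c • φ) = c • pdx φ := by
  ext p
  simp [pdx, fderiv_const_smul_field]

theorem pdy_const_smul (φ : ℝ × ℝ → ℝ) (c : ℝ) : pdy (c • φ) = c • pdy φ := by
  ext p
  simp [pdy, fderiv_const_smul_field]

theorem pdx_zero : pdx 0 = 0 := by
  ext p
  simp [pdx]

theorem pdy_zero : pdy 0 = 0 := by
  ext p
  simp [pdy]

theorem pdy_comp_swap (φ : ℝ × ℝ → ℝ) : pdy (φ ∘ Prod.swap) = pdx φ ∘ Prod.swap := by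
  ext p
  have := (ContinuousLinearEquiv.prodComm ℝ ℝ ℝ).comp_right_fderiv (f := φ) (x := p)
  exact DFunLike.congr_fun this (0, 1)

theorem hasDerivAt_pdy {φ : ℝ × ℝ → ℝ} {p : ℝ × ℝ} (hφ : DifferentiableAt ℝ φ p) :
    HasDerivAt (fun t => φ (p.1, t)) (pdy φ p) p.2 :=
  hφ.hasFDerivAt.comp_hasDerivAt p.2 ((hasDerivAt_const p.2 p.1).prodMk (hasDerivAt_id p.2))

end TestFunctions

section Poincare

theorem isOpen_Omega : IsOpen Omega := isOpen_Ioo.prod isOpen_Ioo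

theorem preimage_swap_Omega : Prod.swap ⁻¹' Omega = Omega := preimage_swap_prod _ _

theorem setIntegral_Omega_comp_swap (R : Set (ℝ × ℝ)) (f : ℝ × ℝ → ℝ) :
    ∫ p in Omega ∩ Prod.swap ⁻¹' R, f p.swap = ∫ p in Omega ∩ R, f p := by
  conv_lhs => rw [← preimage_swap_Omega, ← preimage_inter]
  exact (Measure.measurePreserving_swap (μ := volume) (ν := volume)).setIntegral_preimage_emb
    MeasurableEquiv.prodComm.measurableEmbedding f _

variable {φ : ℝ × ℝ → ℝ} {R : Set (ℝ × ℝ)} {w : ℝ → ℝ}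

theorem IsTest.setIntegral_sq_le_of_snd_le (hφ : IsTest φ) (hR : MeasurableSet R)
    (hw : ContinuousOn w (Ioo 0 1)) (hw0 : ∀ x ∈ Ioo (0 : ℝ) 1, 0 ≤ w x)
    (hRw : ∀ p ∈ Omega ∩ R, p.2 ≤ w p.1) :
    ∫ p in Omega ∩ R, φ p ^ 2 ≤ ∫ p in Omega, (w p.1 * pdy φ p) ^ 2 := by
  have hint : IntegrableOn (R.indicator fun p => φ p ^ 2) Omega :=
    (hφ.memLp.integrable_sq.indicator hR).integrableOn
  have hint' : IntegrableOn (fun p => (w p.1 * pdy φ p) ^ 2) Omega :=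
    ((hφ.fderiv_apply (0, 1)).memLp_continuousOn_mul isOpen_Omega
      (hw.comp continuousOn_fst fun p hp => hp.1)).integrable_sq
  rw [← setIntegral_indicator hR, Omega, Measure.volume_eq_prod, setIntegral_prod _ hint,
    setIntegral_prod _ hint']
  rw [IntegrableOn, Omega, Measure.volume_eq_prod, ← Measure.prod_restrict] at hint hint'
  refine setIntegral_mono_on hint.integral_prod_left hint'.integral_prod_left measurableSet_Ioo
    fun x hx => ?_
  have hderiv (y : ℝ) : deriv (fun t => φ (x, t)) y = pdy φ (x, y) :=
    (hasDerivAt_pdy (hφ.differentiable (x, y))).deriv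
  have hfiber := setIntegral_sq_le_sq_mul_setIntegral_deriv_sq (a := 0) (b := 1)
    (g := fun t => φ (x, t)) (S := Prod.mk x ⁻¹' R) ((hφ.1.of_le (by simp)).comp (by fun_prop))
    (hφ.eq_zero_of_notMem (by simp [Omega])) (hw0 x hx) fun y hy => by
      simpa using hRw (x, y) ⟨⟨hx, hy.1⟩, hy.2⟩
  simp only [hderiv, ← integral_const_mul, ← mul_pow] at hfiber
  rwa [← setIntegral_indicator (measurable_prodMk_left hR)] at hfiber

theorem IsTest.setIntegral_sq_le_of_fst_le (hφ : IsTest φ) (hR : MeasurableSet R)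
    (hw : ContinuousOn w (Ioo 0 1)) (hw0 : ∀ y ∈ Ioo (0 : ℝ) 1, 0 ≤ w y)
    (hRw : ∀ p ∈ Omega ∩ R, p.1 ≤ w p.2) :
    ∫ p in Omega ∩ R, φ p ^ 2 ≤ ∫ p in Omega, (w p.2 * pdx φ p) ^ 2 := by
  have hφ' : IsTest (φ ∘ Prod.swap) := by
    simpa only [IsTest, preimage_swap_Omega] using hφ.comp_swap
  calc ∫ p in Omega ∩ R, φ p ^ 2
      = ∫ p in Omega ∩ Prod.swap ⁻¹' R, (φ ∘ Prod.swap) p ^ 2 :=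
        (setIntegral_Omega_comp_swap R fun p => φ p ^ 2).symm
    _ ≤ ∫ p in Omega, (w p.1 * pdy (φ ∘ Prod.swap) p) ^ 2 :=
        hφ'.setIntegral_sq_le_of_snd_le (measurable_swap hR) hw hw0
          fun p hp => hRw p.swap ⟨⟨hp.1.2, hp.1.1⟩, hp.2⟩
    _ = ∫ p in Omega, (w p.2 * pdx φ p) ^ 2 := by
        simpa [pdy_comp_swap] using
          setIntegral_Omega_comp_swap univ fun p => (w p.2 * pdx φ p) ^ 2

variable {α₁ α₂ : ℝ}

theorem continuousOn_rpow_Ioo (α : ℝ) : ContinuousOn (fun t : ℝ => t ^ α) (Ioo 0 1) :=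
  fun _ ht => (Real.continuousAt_rpow_const _ _ (.inl ht.1.ne')).continuousWithinAt

theorem fst_le_snd_rpow_of_rpow_fst_le (hα : 0 < α₁ → α₁ * α₂ ≤ 1) {p : ℝ × ℝ} (hp : p ∈ Omega)
    (hxy : p.1 ^ α₂ ≤ p.2) : p.1 ≤ p.2 ^ α₁ := by
  obtain ⟨⟨hx0, hx1⟩, hy0, hy1⟩ := hp
  rcases le_or_gt α₁ 0 with hα₁ | hα₁
  · exact hx1.le.trans (Real.one_le_rpow_of_pos_of_le_one_of_nonpos hy0 hy1.le hα₁)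
  calc p.1 = p.1 ^ (1 : ℝ) := (Real.rpow_one _).symm
    _ ≤ p.1 ^ (α₂ * α₁) :=
        Real.rpow_le_rpow_of_exponent_ge hx0 hx1.le (by linarith [hα hα₁])
    _ = (p.1 ^ α₂) ^ α₁ := Real.rpow_mul hx0.le _ _
    _ ≤ p.2 ^ α₁ := by gcongr

theorem IsTest.setIntegral_sq_le (hφ : IsTest φ) (hα : 0 < α₁ → α₁ * α₂ ≤ 1) :
    ∫ p in Omega, φ p ^ 2 ≤
      (∫ p in Omega, (p.2 ^ α₁ * pdx φ p) ^ 2) + ∫ p in Omega, (p.1 ^ α₂ * pdy φ p) ^ 2 := by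
  set R := {p : ℝ × ℝ | p.2 ≤ p.1 ^ α₂}
  have hR : MeasurableSet R := measurableSet_le measurable_snd (measurable_fst.pow_const α₂)
  have below : ∫ p in Omega ∩ R, φ p ^ 2 ≤ ∫ p in Omega, (p.1 ^ α₂ * pdy φ p) ^ 2 :=
    hφ.setIntegral_sq_le_of_snd_le hR (continuousOn_rpow_Ioo α₂)
      (fun x hx => Real.rpow_nonneg hx.1.le _) fun p hp => hp.2
  have above : ∫ p in Omega ∩ Rᶜ, φ p ^ 2 ≤ ∫ p in Omega, (p.2 ^ α₁ * pdx φ p) ^ 2 :=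
    hφ.setIntegral_sq_le_of_fst_le hR.compl (continuousOn_rpow_Ioo α₁)
      (fun y hy => Real.rpow_nonneg hy.1.le _) fun p hp =>
        fst_le_snd_rpow_of_rpow_fst_le hα hp.1 (le_of_not_ge hp.2)
  rw [← integral_inter_add_sdiff hR hφ.memLp.integrable_sq.integrableOn, sdiff_eq]
  linarith

end Poincare

section L2Tuples

variable {X : Type*} [MeasurableSpace X] {μ : Measure X}

theorem inner_eq_integral_mul_of_ae_eq {F G : Lp ℝ 2 μ} {a b : X → ℝ} (hF : F =ᵐ[μ] a)
    (hG : G =ᵐ[μ] b) : inner ℝ F G = ∫ x, a x * b x ∂μ := by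
  rw [L2.inner_def]
  refine integral_congr_ae ?_
  filter_upwards [hF, hG] with x hFx hGx
  simp [hFx, hGx, mul_comm]

theorem norm_sq_eq_integral_sq_of_ae_eq {F : Lp ℝ 2 μ} {a : X → ℝ} (hF : F =ᵐ[μ] a) :
    ‖F‖ ^ 2 = ∫ x, a x ^ 2 ∂μ := by
  rw [← real_inner_self_eq_norm_sq, inner_eq_integral_mul_of_ae_eq hF hF]
  simp only [sq]

variable {ι : Type*} {q : ENNReal} {t s : PiLp 2 fun _ : ι => Lp ℝ q μ} {F G : ι → X → ℝ}

/-- `Represents t F`: the functions `F i` are representatives of the `Lp` classes `t i`. -/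
def Represents (t : PiLp 2 fun _ : ι => Lp ℝ q μ) (F : ι → X → ℝ) : Prop :=
  ∀ i, t i =ᵐ[μ] F i

namespace Represents

theorem zero : Represents (0 : PiLp 2 fun _ : ι => Lp ℝ q μ) 0 :=
  fun _ => Lp.coeFn_zero ℝ q μ

theorem add (ht : Represents t F) (hs : Represents s G) : Represents (t + s) (F + G) :=
  fun i => (Lp.coeFn_add _ _).trans ((ht i).add (hs i))

theorem sub (ht : Represents t F) (hs : Represents s G) : Represents (t - s) (F - G) :=
  fun i => (Lp.coeFn_sub _ _).trans ((ht i).sub (hs i))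

theorem const_smul (ht : Represents t F) (c : ℝ) : Represents (c • t) (c • F) :=
  fun i => (Lp.coeFn_smul _ _).trans ((ht i).const_smul c)

end Represents

theorem exists_represents (hF : ∀ i, MemLp (F i) q μ) :
    ∃ t : PiLp 2 fun _ : ι => Lp ℝ q μ, Represents t F :=
  ⟨WithLp.toLp 2 fun i => (hF i).toLp (F i), fun i => (hF i).coeFn_toLp⟩

end L2Tuples

section WeightedJets

/-- The weighted first-order jet `(u, y^α₁ gx, x^α₂ gy)`, whose entries are the functions that
enter the norm of `𝓗¹(Ω)`. -/
def weightedJet (α₁ α₂ : ℝ) (u gx gy : ℝ × ℝ → ℝ) : Fin 3 → ℝ × ℝ → ℝ :=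
  ![u, fun p => p.2 ^ α₁ * gx p, fun p => p.1 ^ α₂ * gy p]

/-- The real Hilbert space `L²(Ω)`. -/
abbrev OmegaL2 : Type := Lp ℝ 2 (volume.restrict Omega)

/-- The Hilbert space `L²(Ω)³` containing the weighted jets of the functions in `𝓗¹(Ω)`. -/
abbrev JetL2 : Type := PiLp 2 fun _ : Fin 3 => OmegaL2

variable {α₁ α₂ : ℝ} {u gx gy v hx hy φ ψ : ℝ × ℝ → ℝ} {t : JetL2}

theorem weightedJet_zero : weightedJet α₁ α₂ 0 0 0 = 0 := by
  ext i p
  fin_cases i <;> simp [weightedJet]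

theorem weightedJet_add : weightedJet α₁ α₂ (u + v) (gx + hx) (gy + hy) =
    weightedJet α₁ α₂ u gx gy + weightedJet α₁ α₂ v hx hy := by
  ext i p
  fin_cases i <;> simp [weightedJet, mul_add]

theorem weightedJet_sub : weightedJet α₁ α₂ (u - v) (gx - hx) (gy - hy) =
    weightedJet α₁ α₂ u gx gy - weightedJet α₁ α₂ v hx hy := by
  ext i p
  fin_cases i <;> simp [weightedJet, mul_sub]

theorem weightedJet_const_smul (c : ℝ) : weightedJet α₁ α₂ (c • u) (c • gx) (c • gy) =
    c • weightedJet α₁ α₂ u gx gy := by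
  ext i p
  fin_cases i <;> simp [weightedJet, mul_left_comm]

theorem Represents.norm_eq_H1Norm (ht : Represents t (weightedJet α₁ α₂ u gx gy)) :
    ‖t‖ = H1Norm α₁ α₂ u gx gy := by
  simp only [PiLp.norm_eq_of_L2, Fin.sum_univ_three, norm_sq_eq_integral_sq_of_ae_eq (ht _)]
  rfl

theorem MemH1.memLp_weightedJet (h : MemH1 α₁ α₂ u gx gy) (i : Fin 3) :
    MemLp (weightedJet α₁ α₂ u gx gy i) 2 (volume.restrict Omega) := by
  fin_cases i
  exacts [h.memL2, h.wgx, h.wgy]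

theorem continuousOn_snd_rpow : ContinuousOn (fun p : ℝ × ℝ => p.2 ^ α₁) Omega :=
  (continuousOn_rpow_Ioo α₁).comp continuousOn_snd fun _ hp => hp.2

theorem continuousOn_fst_rpow : ContinuousOn (fun p : ℝ × ℝ => p.1 ^ α₂) Omega :=
  (continuousOn_rpow_Ioo α₂).comp continuousOn_fst fun _ hp => hp.1

theorem snd_rpow_ne_zero {p : ℝ × ℝ} (hp : p ∈ Omega) : p.2 ^ α₁ ≠ 0 :=
  (Real.rpow_pos_of_pos hp.2.1 _).ne'

theorem fst_rpow_ne_zero {p : ℝ × ℝ} (hp : p ∈ Omega) : p.1 ^ α₂ ≠ 0 :=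
  (Real.rpow_pos_of_pos hp.1.1 _).ne'

theorem IsTest.memLp_weightedJet (hφ : IsTest φ) (i : Fin 3) :
    MemLp (weightedJet α₁ α₂ φ (pdx φ) (pdy φ) i) 2 (volume.restrict Omega) := by
  fin_cases i
  exacts [hφ.memLp, (hφ.fderiv_apply _).memLp_continuousOn_mul isOpen_Omega continuousOn_snd_rpow,
    (hφ.fderiv_apply _).memLp_continuousOn_mul isOpen_Omega continuousOn_fst_rpow]

variable (α₁ α₂) in
/-- The weighted jets of test functions, as a subspace of `L²(Ω)³`. -/
def testJets : Submodule ℝ JetL2 where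
  carrier := {t | ∃ φ, IsTest φ ∧ Represents t (weightedJet α₁ α₂ φ (pdx φ) (pdy φ))}
  zero_mem' := ⟨0, .zero, by rw [pdx_zero, pdy_zero, weightedJet_zero]; exact .zero⟩
  add_mem' := by
    rintro t s ⟨φ, hφ, ht⟩ ⟨ψ, hψ, hs⟩
    refine ⟨φ + ψ, hφ.add hψ, ?_⟩
    rw [hφ.pdx_add hψ, hφ.pdy_add hψ, weightedJet_add]
    exact ht.add hs
  smul_mem' := by
    rintro c t ⟨φ, hφ, ht⟩
    refine ⟨c • φ, hφ.const_smul c, ?_⟩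
    rw [pdx_const_smul, pdy_const_smul, weightedJet_const_smul]
    exact ht.const_smul c

variable (α₁ α₂) in
/-- The space `𝓗₀¹(Ω)`, realised isometrically as a closed subspace of `L²(Ω)³` by sending a
function to its weighted jet. -/
def H10Jets : Submodule ℝ JetL2 := (testJets α₁ α₂).topologicalClosure

theorem H10Jets_subset_of_isClosed {S : Set JetL2} (hS : IsClosed S)
    (htest : ∀ t φ, IsTest φ → Represents t (weightedJet α₁ α₂ φ (pdx φ) (pdy φ)) → t ∈ S) :
    (H10Jets α₁ α₂ : Set JetL2) ⊆ S :=
  closure_minimal (fun t ⟨φ, hφ, ht⟩ => htest t φ hφ ht) hS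

theorem norm_sq_le_of_mem_H10Jets (hα : 0 < α₁ → α₁ * α₂ ≤ 1) (ht : t ∈ H10Jets α₁ α₂) :
    ‖t 0‖ ^ 2 ≤ ‖t 1‖ ^ 2 + ‖t 2‖ ^ 2 := by
  refine H10Jets_subset_of_isClosed (S := {t | ‖t 0‖ ^ 2 ≤ ‖t 1‖ ^ 2 + ‖t 2‖ ^ 2})
    (isClosed_le (by fun_prop) (by fun_prop)) (fun t φ hφ ht => ?_) ht
  simp only [mem_ofPred_eq, norm_sq_eq_integral_sq_of_ae_eq (ht _)]
  exact hφ.setIntegral_sq_le hα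

theorem mem_H10Jets_iff (ht : Represents t (weightedJet α₁ α₂ u gx gy)) :
    t ∈ H10Jets α₁ α₂ ↔ ∀ ε : ℝ, 0 < ε → ∃ φ, IsTest φ ∧
      H1Norm α₁ α₂ (u - φ) (gx - pdx φ) (gy - pdy φ) < ε := by
  have dist_eq {s φ} (hs : Represents s (weightedJet α₁ α₂ φ (pdx φ) (pdy φ))) :
      dist t s = H1Norm α₁ α₂ (u - φ) (gx - pdx φ) (gy - pdy φ) := by
    rw [dist_eq_norm, Represents.norm_eq_H1Norm (weightedJet_sub ▸ ht.sub hs)]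
  rw [H10Jets, ← SetLike.mem_coe, Submodule.topologicalClosure_coe, Metric.mem_closure_iff]
  refine forall₂_congr fun ε _ => ⟨?_, ?_⟩
  · rintro ⟨s, ⟨φ, hφ, hs⟩, hlt⟩
    exact ⟨φ, hφ, (dist_eq hs).symm.trans_lt hlt⟩
  · rintro ⟨φ, hφ, hlt⟩
    obtain ⟨s, hs⟩ := exists_represents hφ.memLp_weightedJet
    exact ⟨s, ⟨φ, hφ, hs⟩, (dist_eq hs).trans_lt hlt⟩

theorem integral_mul_fderiv_of_mem_H10Jets (ht : t ∈ H10Jets α₁ α₂) {i : Fin 3}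
    {w : ℝ × ℝ → ℝ} {d : ℝ × ℝ} (hw : ContinuousOn w Omega) (hw0 : ∀ p ∈ Omega, w p ≠ 0)
    (hi : ∀ φ, weightedJet α₁ α₂ φ (pdx φ) (pdy φ) i = fun p => w p * fderiv ℝ φ p d)
    (hψ : IsTest ψ) :
    ∫ p in Omega, t 0 p * fderiv ℝ ψ p d = -∫ p in Omega, ((w p)⁻¹ * t i p) * ψ p := by
  have hwψ : MemLp (fun p => (w p)⁻¹ * ψ p) 2 (volume.restrict Omega) :=
    hψ.memLp_continuousOn_mul isOpen_Omega (hw.inv₀ hw0)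
  have hdψ : MemLp (fun p => fderiv ℝ ψ p d) 2 (volume.restrict Omega) :=
    (hψ.fderiv_apply d).memLp
  have weak : inner ℝ (t 0) (hdψ.toLp _) = -inner ℝ (t i) (hwψ.toLp _) := by
    refine H10Jets_subset_of_isClosed
      (S := {t | inner ℝ (t 0) (hdψ.toLp _) = -inner ℝ (t i) (hwψ.toLp _)})
      (isClosed_eq (by fun_prop) (by fun_prop)) (fun s φ hφ hs => ?_) ht
    rw [mem_ofPred_eq, inner_eq_integral_mul_of_ae_eq (hs 0) hdψ.coeFn_toLp,
      inner_eq_integral_mul_of_ae_eq (hs i) hwψ.coeFn_toLp, hi]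
    refine (hφ.setIntegral_mul_fderiv hψ d).trans (congrArg Neg.neg ?_)
    refine setIntegral_congr_fun isOpen_Omega.measurableSet fun p hp => ?_
    have := hw0 p hp
    field_simp
  rw [inner_eq_integral_mul_of_ae_eq .rfl hdψ.coeFn_toLp,
    inner_eq_integral_mul_of_ae_eq .rfl hwψ.coeFn_toLp] at weak
  simpa only [mul_assoc, mul_left_comm] using weak

theorem locallyIntegrableOn_OmegaL2 (F : OmegaL2) : LocallyIntegrableOn F Omega :=
  locallyIntegrableOn_of_locallyIntegrable_restrict ((Lp.memLp F).locallyIntegrable one_le_two)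

theorem locallyIntegrableOn_inv_mul_OmegaL2 {w : ℝ × ℝ → ℝ} (hw : ContinuousOn w Omega)
    (hw0 : ∀ p ∈ Omega, w p ≠ 0) (F : OmegaL2) :
    LocallyIntegrableOn (fun p => (w p)⁻¹ * F p) Omega :=
  (locallyIntegrableOn_OmegaL2 F).continuousOn_mul (hw.inv₀ hw0) isOpen_Omega.isLocallyClosed

theorem represents_weightedJet_inv_mul (t : JetL2) :
    Represents t (weightedJet α₁ α₂ (t 0) (fun p => (p.2 ^ α₁)⁻¹ * t 1 p)
      fun p => (p.1 ^ α₂)⁻¹ * t 2 p) := by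
  have hΩ := ae_restrict_mem (μ := volume) isOpen_Omega.measurableSet
  intro i
  fin_cases i
  · rfl
  · filter_upwards [hΩ] with p hp using (mul_inv_cancel_left₀ (snd_rpow_ne_zero hp) _).symm
  · filter_upwards [hΩ] with p hp using (mul_inv_cancel_left₀ (fst_rpow_ne_zero hp) _).symm

theorem exists_memH10_of_mem_H10Jets (ht : t ∈ H10Jets α₁ α₂) :
    ∃ u gx gy, MemH10 α₁ α₂ u gx gy ∧ Represents t (weightedJet α₁ α₂ u gx gy) := by
  have hrep := represents_weightedJet_inv_mul (α₁ := α₁) (α₂ := α₂) t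
  have hx0 (p) (hp : p ∈ Omega) : p.2 ^ α₁ ≠ 0 := snd_rpow_ne_zero hp
  have hy0 (p) (hp : p ∈ Omega) : p.1 ^ α₂ ≠ 0 := fst_rpow_ne_zero hp
  refine ⟨_, _, _, ⟨⟨Lp.memLp _, ⟨locallyIntegrableOn_OmegaL2 _, ?_, fun ψ hψ => ?_⟩,
    ⟨locallyIntegrableOn_OmegaL2 _, ?_, fun ψ hψ => ?_⟩, ?_, ?_⟩, ?_⟩, hrep⟩
  · exact locallyIntegrableOn_inv_mul_OmegaL2 continuousOn_snd_rpow hx0 _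
  · exact integral_mul_fderiv_of_mem_H10Jets ht continuousOn_snd_rpow hx0 (fun _ => rfl) hψ
  · exact locallyIntegrableOn_inv_mul_OmegaL2 continuousOn_fst_rpow hy0 _
  · exact integral_mul_fderiv_of_mem_H10Jets ht continuousOn_fst_rpow hy0 (fun _ => rfl) hψ
  · exact (memLp_congr_ae (hrep 1)).1 (Lp.memLp _)
  · exact (memLp_congr_ae (hrep 2)).1 (Lp.memLp _)
  · exact (mem_H10Jets_iff hrep).1 ht

end WeightedJets

section MulGraph

variable {X : Type*} [MeasurableSpace X]

/-- The graph of the (possibly unbounded) operator of multiplication by `m` on `Lp`. -/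
def mulGraph (q : ENNReal) (μ : Measure X) (m : X → ℝ) : Submodule ℝ (Lp ℝ q μ × Lp ℝ q μ) where
  carrier := {e | e.2 =ᵐ[μ] fun x => m x * e.1 x}
  zero_mem' := by
    simp only [mem_ofPred_eq, Prod.fst_zero, Prod.snd_zero]
    filter_upwards [Lp.coeFn_zero ℝ q μ] with x hx
    simp only [hx, Pi.zero_apply, mul_zero]
  add_mem' {e e'} he he' := by
    simp only [mem_ofPred_eq, Prod.fst_add, Prod.snd_add] at he he' ⊢
    filter_upwards [Lp.coeFn_add e.1 e'.1, Lp.coeFn_add e.2 e'.2, he, he'] with x h₁ h₂ hx hx'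
    simp only [h₁, h₂, Pi.add_apply, hx, hx', mul_add]
  smul_mem' c e he := by
    simp only [mem_ofPred_eq, Prod.smul_fst, Prod.smul_snd] at he ⊢
    filter_upwards [Lp.coeFn_smul c e.1, Lp.coeFn_smul c e.2, he] with x h₁ h₂ hx
    simp only [h₁, h₂, Pi.smul_apply, hx, smul_eq_mul, mul_left_comm]

theorem isClosed_mulGraph {μ : Measure X} {q : ENNReal} [Fact (1 ≤ q)] (m : X → ℝ) :
    IsClosed (mulGraph q μ m : Set (Lp ℝ q μ × Lp ℝ q μ)) := by
  refine IsSeqClosed.isClosed fun e l he hlim => ?_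
  obtain ⟨hlim₁, hlim₂⟩ := Prod.tendsto_iff _ _ |>.1 hlim
  obtain ⟨k, hk, hae₁⟩ := (tendstoInMeasure_of_tendsto_Lp hlim₁).exists_seq_tendsto_ae
  obtain ⟨j, hj, hae₂⟩ := (tendstoInMeasure_of_tendsto_Lp
    (hlim₂.comp hk.tendsto_atTop)).exists_seq_tendsto_ae
  filter_upwards [hae₁, hae₂, ae_all_iff.2 he] with x hx₁ hx₂ hx
  refine tendsto_nhds_unique hx₂ (((hx₁.comp hj.tendsto_atTop).const_mul (m x)).congr fun n => ?_)
  exact (hx _).symm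

end MulGraph

section EnergySpace

/-- The Hilbert space `L²(Ω)³ × L²(Ω)` of weighted jets paired with a candidate for `√V u`. -/
abbrev EnergyL2 : Type := WithLp 2 (JetL2 × OmegaL2)

/-- The map `(t, s) ↦ t i` extracting the `i`-th entry of the jet. -/
def jetEntry (i : Fin 3) : EnergyL2 →L[ℝ] OmegaL2 :=
  (PiLp.proj 2 (fun _ => OmegaL2) i).comp (WithLp.fstL 2 ℝ JetL2 OmegaL2)

/-- The map `(t, s) ↦ s` extracting the entry that stands for `√V u`. -/
def potentialEntry : EnergyL2 →L[ℝ] OmegaL2 := WithLp.sndL 2 ℝ JetL2 OmegaL2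

/-- The space `H₀(Ω)`, realised as a subspace of `L²(Ω)⁴` by sending `u` to
`(u, y^α₁ ∂ₓu, x^α₂ ∂_yu, √V u)`. -/
def H0Jets (α₁ α₂ : ℝ) (V : ℝ × ℝ → ℝ) : Submodule ℝ EnergyL2 :=
  (H10Jets α₁ α₂).comap (WithLp.fstL 2 ℝ JetL2 OmegaL2 : EnergyL2 →ₗ[ℝ] JetL2) ⊓
    (mulGraph 2 (volume.restrict Omega) fun p => √(V p)).comap
      ((jetEntry 0).prod potentialEntry : EnergyL2 →ₗ[ℝ] OmegaL2 × OmegaL2)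

/-- The form `a` on `L²(Ω)⁴`. -/
def energyForm : EnergyL2 →L[ℝ] EnergyL2 →L[ℝ] ℝ :=
  (innerSL ℝ).bilinearComp (jetEntry 1) (jetEntry 1) +
    (innerSL ℝ).bilinearComp (jetEntry 2) (jetEntry 2) +
    (innerSL ℝ).bilinearComp potentialEntry potentialEntry

variable {α₁ α₂ : ℝ} {V u gx gy v hx hy : ℝ × ℝ → ℝ}

theorem isClosed_H0Jets : IsClosed (H0Jets α₁ α₂ V : Set EnergyL2) :=
  ((testJets α₁ α₂).isClosed_topologicalClosure.preimage
    (WithLp.fstL 2 ℝ JetL2 OmegaL2).continuous).inter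
    ((isClosed_mulGraph _).preimage ((jetEntry 0).prod potentialEntry).continuous)

instance : CompleteSpace (H0Jets α₁ α₂ V) := isClosed_H0Jets.completeSpace_coe

theorem mem_H0Jets_iff {e : EnergyL2} : e ∈ H0Jets α₁ α₂ V ↔ e.fst ∈ H10Jets α₁ α₂ ∧
    e.snd =ᵐ[volume.restrict Omega] fun p => √(V p) * e.fst 0 p :=
  Iff.rfl

theorem energyForm_apply (e e' : EnergyL2) : energyForm e e' =
    inner ℝ (e.fst 1) (e'.fst 1) + inner ℝ (e.fst 2) (e'.fst 2) + inner ℝ e.snd e'.snd :=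
  rfl

theorem half_mul_norm_mul_norm_le_energyForm_self (hα : 0 < α₁ → α₁ * α₂ ≤ 1) {e : EnergyL2}
    (he : e ∈ H0Jets α₁ α₂ V) : 1 / 2 * ‖e‖ * ‖e‖ ≤ energyForm e e := by
  have poincare := norm_sq_le_of_mem_H10Jets hα (mem_H0Jets_iff.1 he).1
  have norm_sq : ‖e‖ ^ 2 =
      ‖e.fst 0‖ ^ 2 + ‖e.fst 1‖ ^ 2 + ‖e.fst 2‖ ^ 2 + ‖e.snd‖ ^ 2 := by
    rw [WithLp.prod_norm_sq_eq_of_L2, PiLp.norm_sq_eq_of_L2, Fin.sum_univ_three]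
  have := sq_nonneg ‖e.snd‖
  simp only [energyForm_apply, real_inner_self_eq_norm_sq]
  linarith

variable (α₁ α₂ V) in
/-- The form `a` on `H₀(Ω)`. -/
def H0Form : H0Jets α₁ α₂ V →L[ℝ] H0Jets α₁ α₂ V →L[ℝ] ℝ :=
  energyForm.bilinearComp (H0Jets α₁ α₂ V).subtypeL (H0Jets α₁ α₂ V).subtypeL

theorem isCoercive_H0Form (hα : 0 < α₁ → α₁ * α₂ ≤ 1) : IsCoercive (H0Form α₁ α₂ V) :=
  ⟨1 / 2, by norm_num, fun e => half_mul_norm_mul_norm_le_energyForm_self hα e.2⟩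

variable (α₁ α₂ V) in
/-- The functional `v ↦ ∫ F v` on `H₀(Ω)`. -/
def H0Functional (F : OmegaL2) : H0Jets α₁ α₂ V →L[ℝ] ℝ :=
  (innerSL ℝ F).comp ((jetEntry 0).comp (H0Jets α₁ α₂ V).subtypeL)

theorem H0Functional_toLp_apply {f : ℝ × ℝ → ℝ} (hf : MemLp f 2 (volume.restrict Omega))
    {e : H0Jets α₁ α₂ V} (he : Represents (e : EnergyL2).fst (weightedJet α₁ α₂ v hx hy)) :
    H0Functional α₁ α₂ V (hf.toLp f) e = ∫ p in Omega, f p * v p :=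
  inner_eq_integral_mul_of_ae_eq hf.coeFn_toLp (he 0)

theorem aForm_eq_H0Form (hV0 : ∀ᵐ p ∂volume.restrict Omega, 0 ≤ V p) {e e' : H0Jets α₁ α₂ V}
    (he : Represents (e : EnergyL2).fst (weightedJet α₁ α₂ u gx gy))
    (he' : Represents (e' : EnergyL2).fst (weightedJet α₁ α₂ v hx hy)) :
    aForm α₁ α₂ V u gx gy v hx hy = H0Form α₁ α₂ V e e' := by
  have hform : H0Form α₁ α₂ V e e' = _ := energyForm_apply e e'
  simp only [hform, L2.inner_def]
  rw [← integral_add (L2.integrable_inner _ _) (L2.integrable_inner _ _),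
    ← integral_add ((L2.integrable_inner _ _).add (L2.integrable_inner _ _))
      (L2.integrable_inner _ _)]
  refine integral_congr_ae ?_
  filter_upwards [he 0, he 1, he 2, he' 0, he' 1, he' 2, (mem_H0Jets_iff.1 e.2).2,
    (mem_H0Jets_iff.1 e'.2).2, hV0] with p hu hgx hgy hv hhx hhy hsnd hsnd' hVp
  simp only [hu, hgx, hgy, hv, hhx, hhy, hsnd, hsnd', weightedJet, Matrix.cons_val,
    RCLike.inner_apply, conj_trivial]
  linear_combination (-u p * v p) * Real.mul_self_sqrt hVp

theorem MemH0.exists_H0Jets (hV : AEStronglyMeasurable V (volume.restrict Omega))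
    (hV0 : ∀ᵐ p ∂volume.restrict Omega, 0 ≤ V p) (h : MemH0 α₁ α₂ V u gx gy) :
    ∃ e : H0Jets α₁ α₂ V, Represents (e : EnergyL2).fst (weightedJet α₁ α₂ u gx gy) := by
  obtain ⟨t, ht⟩ := exists_represents h.1.1.memLp_weightedJet
  have hmeas : AEStronglyMeasurable (fun p => √(V p) * u p) (volume.restrict Omega) :=
    (Real.continuous_sqrt.comp_aestronglyMeasurable hV).mul h.1.1.memL2.1
  have hmem : MemLp (fun p => √(V p) * u p) 2 (volume.restrict Omega) := by
    refine (memLp_two_iff_integrable_sq hmeas).2 (h.2.congr ?_)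
    filter_upwards [hV0] with p hp
    rw [mul_pow, Real.sq_sqrt hp]
  refine ⟨⟨WithLp.toLp 2 (t, hmem.toLp _),
    mem_H0Jets_iff.2 ⟨(mem_H10Jets_iff ht).2 h.1.2, hmem.coeFn_toLp.trans ?_⟩⟩, ht⟩
  filter_upwards [ht 0] with p hp
  exact congrArg (√(V p) * ·) hp.symm

theorem exists_memH0_of_H0Jets (hV0 : ∀ᵐ p ∂volume.restrict Omega, 0 ≤ V p)
    (e : H0Jets α₁ α₂ V) : ∃ u gx gy, MemH0 α₁ α₂ V u gx gy ∧
      Represents (e : EnergyL2).fst (weightedJet α₁ α₂ u gx gy) := by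
  obtain ⟨u, gx, gy, hu, he⟩ := exists_memH10_of_mem_H10Jets (mem_H0Jets_iff.1 e.2).1
  refine ⟨u, gx, gy, ⟨hu, (Lp.memLp (e : EnergyL2).snd).integrable_sq.congr ?_⟩, he⟩
  filter_upwards [(mem_H0Jets_iff.1 e.2).2, he 0, hV0] with p hsnd hfst hp
  rw [hsnd, hfst, mul_pow, Real.sq_sqrt hp]
  rfl

theorem H0Form_eq_H0Functional_iff (hV : AEStronglyMeasurable V (volume.restrict Omega))
    (hV0 : ∀ᵐ p ∂volume.restrict Omega, 0 ≤ V p) {f : ℝ × ℝ → ℝ}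
    (hf : MemLp f 2 (volume.restrict Omega)) {e : H0Jets α₁ α₂ V}
    (he : Represents (e : EnergyL2).fst (weightedJet α₁ α₂ u gx gy)) :
    H0Form α₁ α₂ V e = H0Functional α₁ α₂ V (hf.toLp f) ↔
      ∀ v hx hy : ℝ × ℝ → ℝ, MemH0 α₁ α₂ V v hx hy →
        aForm α₁ α₂ V u gx gy v hx hy = ∫ p in Omega, f p * v p := by
  refine ⟨fun h v hx hy hv => ?_, fun h => ContinuousLinearMap.ext fun e' => ?_⟩
  · obtain ⟨e', he'⟩ := hv.exists_H0Jets hV hV0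
    exact (aForm_eq_H0Form hV0 he he').trans <|
      (DFunLike.congr_fun h e').trans (H0Functional_toLp_apply hf he')
  · obtain ⟨v, hx, hy, hv, he'⟩ := exists_memH0_of_H0Jets hV0 e'
    exact (aForm_eq_H0Form hV0 he he').symm.trans <|
      (h v hx hy hv).trans (H0Functional_toLp_apply hf he').symm

end EnergySpace

theorem bijective_of_isCoercive {H : Type*} [NormedAddCommGroup H] [InnerProductSpace ℝ H]
    [CompleteSpace H] {B : H →L[ℝ] H →L[ℝ] ℝ} (hB : IsCoercive B) : Function.Bijective B := by
  have hcomp : ⇑B = InnerProductSpace.toDual ℝ H ∘ hB.continuousLinearEquivOfBilin :=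
    funext fun e => ContinuousLinearMap.ext fun e' =>
      (hB.continuousLinearEquivOfBilin_apply e e').symm
  rw [hcomp]
  exact (InnerProductSpace.toDual ℝ H).bijective.comp hB.continuousLinearEquivOfBilin.bijective

theorem exists_unique_weak_solution_general (α₁ α₂ : ℝ) (hα : 0 < α₁ → α₁ * α₂ ≤ 1)
    (V : ℝ × ℝ → ℝ) (hV : AEStronglyMeasurable V (volume.restrict Omega))
    (hVpos : ∀ᵐ p ∂(volume.restrict Omega), 0 ≤ V p)
    (f : ℝ × ℝ → ℝ) (hf : MemLp f 2 (volume.restrict Omega)) :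
    ∃ u gx gy : ℝ × ℝ → ℝ, MemH0 α₁ α₂ V u gx gy ∧
      (∀ v hx hy : ℝ × ℝ → ℝ, MemH0 α₁ α₂ V v hx hy →
        aForm α₁ α₂ V u gx gy v hx hy = ∫ p in Omega, f p * v p) ∧
      (∀ u' gx' gy' : ℝ × ℝ → ℝ, MemH0 α₁ α₂ V u' gx' gy' →
        (∀ v hx hy : ℝ × ℝ → ℝ, MemH0 α₁ α₂ V v hx hy →
          aForm α₁ α₂ V u' gx' gy' v hx hy = ∫ p in Omega, f p * v p) →
        (∀ᵐ p ∂(volume.restrict Omega), u' p = u p)) := by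
  have hbij : Function.Bijective (H0Form α₁ α₂ V) :=
    bijective_of_isCoercive (H := H0Jets α₁ α₂ V) (isCoercive_H0Form hα)
  obtain ⟨e, he⟩ := hbij.surjective (H0Functional α₁ α₂ V (hf.toLp f))
  obtain ⟨u, gx, gy, hu, hrep⟩ := exists_memH0_of_H0Jets hVpos e
  refine ⟨u, gx, gy, hu, (H0Form_eq_H0Functional_iff hV hVpos hf hrep).1 he,
    fun u' gx' gy' hu' hsol => ?_⟩
  obtain ⟨e', hrep'⟩ := hu'.exists_H0Jets hV hVpos
  have he' := (H0Form_eq_H0Functional_iff hV hVpos hf hrep').2 hsol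
  obtain rfl : e' = e := hbij.injective (he'.trans he.symm)
  exact (hrep' 0).symm.trans (hrep 0)

/-- For `V ∈ L^p(Ω)`, `1 < p < ∞`, `V ≥ 0` a.e. and `f ∈ L²(Ω)`, the
Dirichlet problem has a unique weak solution `u ∈ H₀(Ω)`:
`a(u,v) = ∫_Ω f v` for all `v ∈ H₀(Ω)`, and any other weak solution agrees with `u`
a.e. on `Ω`. -/
theorem exists_unique_weak_solution (α₁ α₂ ppow : ℝ)
    (hα₁ : α₁ ∈ Ioo (0:ℝ) (1/2)) (hα₂ : α₂ ∈ Ioo (0:ℝ) (1/2))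
    (hp : 1 < ppow) (V : ℝ × ℝ → ℝ)
    (hV : MemLp V (ENNReal.ofReal ppow) (volume.restrict Omega))
    (hVpos : ∀ᵐ p ∂(volume.restrict Omega), 0 ≤ V p)
    (f : ℝ × ℝ → ℝ) (hf : MemLp f 2 (volume.restrict Omega)) :
    ∃ u gx gy : ℝ × ℝ → ℝ, MemH0 α₁ α₂ V u gx gy ∧
      (∀ v hx hy : ℝ × ℝ → ℝ, MemH0 α₁ α₂ V v hx hy →
        aForm α₁ α₂ V u gx gy v hx hy = ∫ p in Omega, f p * v p) ∧
      (∀ u' gx' gy' : ℝ × ℝ → ℝ, MemH0 α₁ α₂ V u' gx' gy' →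
        (∀ v hx hy : ℝ × ℝ → ℝ, MemH0 α₁ α₂ V v hx hy →
          aForm α₁ α₂ V u' gx' gy' v hx hy = ∫ p in Omega, f p * v p) →
        (∀ᵐ p ∂(volume.restrict Omega), u' p = u p)) := by
  refine exists_unique_weak_solution_general α₁ α₂ (fun _ => ?_) V hV.1 hVpos f hf
  nlinarith [hα₁.1, hα₁.2, hα₂.2]
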